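/- Let A be a complete lattice and let F, G : A → A be monotone maps. Suppose that for every b ∈ A with νF ≤ b and G b ≤ b, one has G (F b) ≤ F b. Then G (νF) ≤ νF. (In other words, in the closedness hypothesis 'Pre_{νF}(G) is closed under F', the condition νF ≤ F b is automatic, since νF = F(νF) ≤ F b whenever νF ≤ b.) -/

import Mathlib

/-- If for every `b` with `νF ≤ b` and `G b ≤ b` we have
`G (F b) ≤ F b`, then `G (νF) ≤ νF`. -/
theorem stmt1 {A : Type*} [CompleteLattice A] (F G : A →o A)
    (hclosed : ∀ b : A, OrderHom.gfp F ≤ b → G b ≤ b → G (F b) ≤ F b) :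
    G (OrderHom.gfp F) ≤ OrderHom.gfp F := by
  -- The least element `m` of the set below is a post-fixed point of `F`, hence equals `νF`.
  set m := sInf {b : A | OrderHom.gfp F ≤ b ∧ G b ≤ b}
  have gfp_le : OrderHom.gfp F ≤ m := le_sInf fun b hb => hb.1
  have map_le : G m ≤ m := le_sInf fun b hb => (G.monotone (sInf_le hb)).trans hb.2
  have le_map : m ≤ F m :=
    sInf_le ⟨F.map_gfp.ge.trans (F.monotone gfp_le), hclosed m gfp_le map_le⟩
  rwa [le_antisymm gfp_le (F.le_gfp le_map)]
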